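/- arXiv:2104.13181 — 2 statements merged into one kernel-verified Lean document; each statement's English description precedes it below -/
import Mathlib

section
/- Let ℍ denote the hyperbolic upper half-plane with its hyperbolic distance dist, on which SL(2, ℝ) acts by Möbius transformations, and let i ∈ ℍ be the point with complex coordinate √−1. For t, θ ∈ ℝ let A(t) ∈ SL(2, ℝ) be the matrix with rows (e^{t/2}, 0) and (0, e^{−t/2}), and let R(θ) ∈ SL(2, ℝ) be the rotation matrix with rows (cos θ, −sin θ) and (sin θ, cos θ). Then for every ε > 0 there exists c > 1 such that for every g ∈ SL(2, ℝ) and every w ∈ ℍ, writing z = g•i: c⁻¹·exp(−dist(z, w)) ≤ (1/(2π))·∫₀^{2π} Leb({t ∈ [0, ∞) : dist((g·R(θ)·A(t))•i, w) < ε}) dθ ≤ c·exp(−dist(z, w)), where Leb denotes Lebesgue measure on ℝ. -/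
open MeasureTheory UpperHalfPlane
open scoped ENNReal

/-- The diagonal one-parameter subgroup `A(t) = diag(e^{t/2}, e^{−t/2})` of `SL(2, ℝ)`. -/
noncomputable def Amat (t : ℝ) : Matrix.SpecialLinearGroup (Fin 2) ℝ :=
  ⟨!![Real.exp (t / 2), 0; 0, Real.exp (-(t / 2))], by
    simp [Matrix.det_fin_two_of, ← Real.exp_add]⟩

/-- The rotation `R(θ) ∈ SO(2) ⊆ SL(2, ℝ)`. -/
noncomputable def Rmat (θ : ℝ) : Matrix.SpecialLinearGroup (Fin 2) ℝ :=
  ⟨!![Real.cos θ, -Real.sin θ; Real.sin θ, Real.cos θ], by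
    rw [Matrix.det_fin_two_of]; ring_nf
    exact Real.cos_sq_add_sin_sq θ⟩

lemma aux_cosh_smul (h : Matrix.SpecialLinearGroup (Fin 2) ℝ) (w : UpperHalfPlane) :
    Real.cosh (dist (h • UpperHalfPlane.I) w) =
      (h 0 0 ^ 2 + h 0 1 ^ 2 - 2 * w.re * (h 0 0 * h 1 0 + h 0 1 * h 1 1)
        + (w.re ^ 2 + w.im ^ 2) * (h 1 0 ^ 2 + h 1 1 ^ 2)) / (2 * w.im) := by
  have hdet : h 0 0 * h 1 1 - h 0 1 * h 1 0 = 1 := by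
    have := h.det_coe
    rwa [Matrix.det_fin_two] at this
  have hN : 0 < h 1 0 ^ 2 + h 1 1 ^ 2 := by
    by_contra hcon
    have h1 : h 1 0 = 0 := by nlinarith [sq_nonneg (h 1 0), sq_nonneg (h 1 1)]
    have h2 : h 1 1 = 0 := by nlinarith [sq_nonneg (h 1 0), sq_nonneg (h 1 1)]
    rw [h1, h2] at hdet
    norm_num at hdet
  have hN' : h 1 1 ^ 2 + h 1 0 ^ 2 ≠ 0 := by rw [add_comm]; exact hN.ne'
  have hw := w.im_pos
  have hc := UpperHalfPlane.coe_specialLinearGroup_apply h UpperHalfPlane.I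
  have hre : (h • UpperHalfPlane.I).re =
      (h 0 0 * h 1 0 + h 0 1 * h 1 1) / (h 1 0 ^ 2 + h 1 1 ^ 2) := by
    rw [← UpperHalfPlane.coe_re, hc, Complex.div_re]
    simp [Complex.normSq_apply]
    field_simp
    ring
  have him : (h • UpperHalfPlane.I).im = 1 / (h 1 0 ^ 2 + h 1 1 ^ 2) := by
    rw [← UpperHalfPlane.coe_im, hc, Complex.div_im]
    simp [Complex.normSq_apply]
    field_simp
    linear_combination (h 1 1 ^ 2 + h 1 0 ^ 2) * hdet
  rw [UpperHalfPlane.cosh_dist', hre, him]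
  have e : (h 0 0 * h 1 0 + h 0 1 * h 1 1) ^ 2 + 1
      = (h 0 0 ^ 2 + h 0 1 ^ 2) * (h 1 0 ^ 2 + h 1 1 ^ 2) := by
    linear_combination (-(h 0 0 * h 1 1 - h 0 1 * h 1 0) - 1) * hdet
  generalize h 1 0 ^ 2 + h 1 1 ^ 2 = N at *
  generalize h 0 0 * h 1 0 + h 0 1 * h 1 1 = B at *
  generalize h 0 0 ^ 2 + h 0 1 ^ 2 = C at *
  rw [div_eq_div_iff (by positivity) (by positivity)]
  field_simp
  linear_combination e

lemma aux_cosh_RA (θ t : ℝ) (w : UpperHalfPlane) :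
    Real.cosh (dist ((Rmat θ * Amat t) • UpperHalfPlane.I) w) =
      Real.cosh t * ((1 + w.re ^ 2 + w.im ^ 2) / (2 * w.im))
      - Real.sinh t * (Real.cos (2 * θ) * ((w.re ^ 2 + w.im ^ 2 - 1) / (2 * w.im))
          + Real.sin (2 * θ) * (w.re / w.im)) := by
  rw [aux_cosh_smul]
  have hw := w.im_pos
  have e1 : Real.exp (t / 2) ^ 2 = Real.cosh t + Real.sinh t := by
    rw [Real.cosh_add_sinh, ← Real.exp_nat_mul]; congr 1; push_cast; ring
  have e2 : Real.exp (-(t / 2)) ^ 2 = Real.cosh t - Real.sinh t := by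
    rw [Real.cosh_sub_sinh, ← Real.exp_nat_mul]; congr 1; push_cast; ring
  have a00 : (Rmat θ * Amat t) 0 0 = Real.cos θ * Real.exp (t / 2) := by
    rw [Matrix.SpecialLinearGroup.coe_mul, Matrix.mul_apply]; simp [Rmat, Amat]
  have a01 : (Rmat θ * Amat t) 0 1 = -Real.sin θ * Real.exp (-(t / 2)) := by
    rw [Matrix.SpecialLinearGroup.coe_mul, Matrix.mul_apply]; simp [Rmat, Amat]
  have a10 : (Rmat θ * Amat t) 1 0 = Real.sin θ * Real.exp (t / 2) := by
    rw [Matrix.SpecialLinearGroup.coe_mul, Matrix.mul_apply]; simp [Rmat, Amat]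
  have a11 : (Rmat θ * Amat t) 1 1 = Real.cos θ * Real.exp (-(t / 2)) := by
    rw [Matrix.SpecialLinearGroup.coe_mul, Matrix.mul_apply]; simp [Rmat, Amat]
  have hs : Real.sin θ ^ 2 = 1 - Real.cos θ ^ 2 := Real.sin_sq θ
  have f1 : (Rmat θ * Amat t) 0 0 ^ 2 + (Rmat θ * Amat t) 0 1 ^ 2
      = Real.cosh t + Real.sinh t * Real.cos (2 * θ) := by
    rw [a00, a01, mul_pow, mul_pow, neg_sq, e1, e2, hs, Real.cos_two_mul]; ring
  have f2 : (Rmat θ * Amat t) 1 0 ^ 2 + (Rmat θ * Amat t) 1 1 ^ 2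
      = Real.cosh t - Real.sinh t * Real.cos (2 * θ) := by
    rw [a10, a11, mul_pow, mul_pow, e1, e2, hs, Real.cos_two_mul]; ring
  have f3 : (Rmat θ * Amat t) 0 0 * (Rmat θ * Amat t) 1 0
      + (Rmat θ * Amat t) 0 1 * (Rmat θ * Amat t) 1 1
      = Real.sinh t * Real.sin (2 * θ) := by
    rw [a00, a01, a10, a11, Real.sin_two_mul]
    linear_combination Real.cos θ * Real.sin θ * e1 - Real.cos θ * Real.sin θ * e2
  rw [f1, f2, f3]
  field_simp
  ring

lemma aux_polar (w : UpperHalfPlane) : ∃ α : ℝ, Real.pi / 2 ≤ α ∧ α ≤ 3 * Real.pi / 2 ∧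
    ∀ θ t : ℝ, Real.cosh (dist ((Rmat θ * Amat t) • UpperHalfPlane.I) w) =
      Real.cosh (t - dist UpperHalfPlane.I w)
        + 2 * Real.sinh t * Real.sinh (dist UpperHalfPlane.I w) * Real.sin (θ - α) ^ 2 := by
  have hw := w.im_pos
  set d := dist UpperHalfPlane.I w with hd
  have hd0 : 0 ≤ d := dist_nonneg
  have hc : Real.cosh d = (1 + w.re ^ 2 + w.im ^ 2) / (2 * w.im) := by
    rw [hd, UpperHalfPlane.cosh_dist']
    simp
    congr 1
    ring
  let ζ : ℂ := ⟨(w.re ^ 2 + w.im ^ 2 - 1) / (2 * w.im), w.re / w.im⟩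
  have hζ : ‖ζ‖ = Real.sinh d := by
    have h1 : ‖ζ‖ ^ 2 = Real.sinh d ^ 2 := by
      rw [Real.sinh_sq, hc, ← Complex.normSq_eq_norm_sq, Complex.normSq_apply]
      simp only [ζ]
      field_simp
      ring
    have h2 : 0 ≤ Real.sinh d := Real.sinh_nonneg_iff.2 hd0
    exact (sq_eq_sq₀ (norm_nonneg _) h2).1 h1
  have hr : Real.sinh d * Real.cos ζ.arg = (w.re ^ 2 + w.im ^ 2 - 1) / (2 * w.im) := by
    rw [← hζ, Complex.norm_mul_cos_arg]
  have hi : Real.sinh d * Real.sin ζ.arg = w.re / w.im := by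
    rw [← hζ, Complex.norm_mul_sin_arg]
  refine ⟨ζ.arg / 2 + Real.pi, ?_, ?_, ?_⟩
  · linarith [Complex.neg_pi_lt_arg ζ]
  · linarith [Complex.arg_le_pi ζ]
  · intro θ t
    rw [aux_cosh_RA, ← hc, ← hr, ← hi, Real.cosh_sub]
    have h3 : Real.cos (2 * θ - ζ.arg) = 1 - 2 * Real.sin (θ - (ζ.arg / 2 + Real.pi)) ^ 2 := by
      have : θ - (ζ.arg / 2 + Real.pi) = (2 * θ - ζ.arg) / 2 - Real.pi := by ring
      rw [this, Real.sin_sub_pi, neg_sq]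
      have h4 := Real.cos_two_mul ((2 * θ - ζ.arg) / 2)
      rw [mul_div_cancel₀ _ (two_ne_zero)] at h4
      rw [h4, Real.sin_sq]; ring
    rw [Real.cos_sub] at h3
    linear_combination (-Real.sinh t * Real.sinh d) * h3

lemma aux_sin (u δ : ℝ) (hu : -(3 * Real.pi / 2) ≤ u) (hu' : u ≤ 3 * Real.pi / 2)
    (h : |Real.sin u| ≤ δ) :
    |u| ≤ Real.pi / 2 * δ ∨ |u - Real.pi| ≤ Real.pi / 2 * δ ∨ |u + Real.pi| ≤ Real.pi / 2 * δ := by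
  have hpi := Real.pi_pos
  have key : ∀ v : ℝ, |v| ≤ Real.pi / 2 → |Real.sin v| ≤ δ → |v| ≤ Real.pi / 2 * δ := by
    intro v hv hs
    have h1 := (Real.mul_abs_le_abs_sin hv).trans hs
    calc |v| = Real.pi / 2 * (2 / Real.pi * |v|) := by field_simp
      _ ≤ _ := by gcongr
  rcases le_total u (-(Real.pi / 2)) with h1 | h1
  · right; right
    refine key _ (abs_le.2 ⟨by linarith, by linarith⟩) ?_
    rwa [Real.sin_add_pi, abs_neg]
  rcases le_total u (Real.pi / 2) with h2 | h2
  · left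
    exact key _ (abs_le.2 ⟨by linarith, by linarith⟩) h
  · right; left
    refine key _ (abs_le.2 ⟨by linarith, by linarith⟩) ?_
    rwa [Real.sin_sub_pi, abs_neg]

/-- The sojourn set in polar coordinates. -/
def auxSet (ε d α θ : ℝ) : Set ℝ :=
  {t : ℝ | 0 ≤ t ∧
    Real.cosh (t - d) + 2 * Real.sinh t * Real.sinh d * Real.sin (θ - α) ^ 2 < Real.cosh ε}

lemma auxSet_subset (ε d α θ : ℝ) (hε : 0 < ε) (hd : 0 ≤ d) :
    auxSet ε d α θ ⊆ Set.Ioo (d - ε) (d + ε) := by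
  rintro t ⟨ht, h⟩
  have h1 : 0 ≤ Real.sinh t := Real.sinh_nonneg_iff.2 ht
  have h2 : 0 ≤ Real.sinh d := Real.sinh_nonneg_iff.2 hd
  have h3 : 0 ≤ 2 * Real.sinh t * Real.sinh d * Real.sin (θ - α) ^ 2 := by positivity
  have h4 : Real.cosh (t - d) < Real.cosh ε := by linarith
  rw [Real.cosh_lt_cosh, abs_of_pos hε, abs_lt] at h4
  constructor <;> linarith [h4.1, h4.2]

lemma auxSet_vol (ε d α θ : ℝ) (hε : 0 < ε) (hd : 0 ≤ d) :
    volume (auxSet ε d α θ) ≤ ENNReal.ofReal (2 * ε) := by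
  refine (measure_mono (auxSet_subset ε d α θ hε hd)).trans ?_
  rw [Real.volume_Ioo]
  apply le_of_eq; congr 1; ring

lemma aux_sinh_ge (t : ℝ) (ht : 1 ≤ t) : Real.exp t / 4 ≤ Real.sinh t := by
  rw [Real.sinh_eq]
  have h1 : 2 ≤ Real.exp t := by linarith [Real.add_one_le_exp t]
  have h2 : Real.exp (-t) ≤ 1 := Real.exp_le_one_iff.2 (by linarith)
  linarith

lemma auxSet_empty (ε d α θ : ℝ) (hε : 0 < ε) (hd : ε + 1 ≤ d)
    (hs : 3 * Real.exp ε * Real.exp (-d) < |Real.sin (θ - α)|) : auxSet ε d α θ = ∅ := by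
  rw [Set.eq_empty_iff_forall_notMem]
  intro t ht
  have hb := auxSet_subset ε d α θ hε (by linarith) ht
  obtain ⟨ht0, h⟩ := ht
  have g1 := aux_sinh_ge d (by linarith)
  have g2 : Real.exp (d - ε) / 4 ≤ Real.sinh t :=
    (div_le_div_of_nonneg_right (Real.exp_le_exp.2 hb.1.le) (by norm_num)).trans
      (aux_sinh_ge t (by linarith [hb.1]))
  have g3 : (3 * Real.exp ε * Real.exp (-d)) ^ 2 ≤ Real.sin (θ - α) ^ 2 := by
    rw [← sq_abs (Real.sin (θ - α))]
    exact pow_le_pow_left₀ (by positivity) hs.le 2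
  have s0 : 0 ≤ Real.sinh t := Real.sinh_nonneg_iff.2 ht0
  have s1 : 0 ≤ Real.sinh d := Real.sinh_nonneg_iff.2 (by linarith)
  have g4 : 2 * (Real.exp (d - ε) / 4) * (Real.exp d / 4) * (3 * Real.exp ε * Real.exp (-d)) ^ 2
      ≤ 2 * Real.sinh t * Real.sinh d * Real.sin (θ - α) ^ 2 := by gcongr
  have g5 : 2 * (Real.exp (d - ε) / 4) * (Real.exp d / 4) * (3 * Real.exp ε * Real.exp (-d)) ^ 2
      = 9 / 8 * Real.exp ε := by
    have : Real.exp ε = Real.exp (d - ε) * Real.exp d * Real.exp ε ^ 2 * Real.exp (-d) ^ 2 := by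
      rw [← Real.exp_nat_mul, ← Real.exp_nat_mul, ← Real.exp_add, ← Real.exp_add, ← Real.exp_add]
      congr 1; push_cast; ring
    linear_combination (-9 / 8) * this
  have g6 : Real.cosh ε ≤ Real.exp ε := by
    rw [← Real.cosh_add_sinh]
    linarith [Real.sinh_nonneg_iff.2 hε.le]
  linarith [Real.cosh_pos (t - d), Real.exp_pos ε]

lemma aux_upper (ε d α : ℝ) (hε : 0 < ε) (hd : 0 ≤ d) (hα : Real.pi / 2 ≤ α)
    (hα' : α ≤ 3 * Real.pi / 2) :
    ENNReal.ofReal (1 / (2 * Real.pi)) *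
      (∫⁻ θ in Set.Ioc (0 : ℝ) (2 * Real.pi), volume (auxSet ε d α θ)) ≤
    ENNReal.ofReal ((2 * ε * Real.exp (ε + 1) + 9 * ε * Real.exp ε) * Real.exp (-d)) := by
  have hpi := Real.pi_pos
  rcases le_total d (ε + 1) with h | h
  · calc _ ≤ ENNReal.ofReal (1 / (2 * Real.pi)) *
          (∫⁻ θ in Set.Ioc (0 : ℝ) (2 * Real.pi), ENNReal.ofReal (2 * ε)) := by
          gcongr
          exact auxSet_vol ε d α _ hε hd
      _ = ENNReal.ofReal (2 * ε) := by
          rw [setLIntegral_const, Real.volume_Ioc, ← ENNReal.ofReal_mul (by positivity),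
            ← ENNReal.ofReal_mul (by positivity)]
          congr 1; field_simp; ring
      _ ≤ _ := by
          apply ENNReal.ofReal_le_ofReal
          have : 1 ≤ Real.exp (ε + 1) * Real.exp (-d) := by
            rw [← Real.exp_add]; exact Real.one_le_exp (by linarith)
          have h2 : 0 ≤ 9 * ε * Real.exp ε * Real.exp (-d) := by positivity
          nlinarith
  · set δ := 3 * Real.exp ε * Real.exp (-d) with hδ
    have hδ0 : 0 < δ := by positivity
    set S : Set ℝ := Set.Icc (α - Real.pi / 2 * δ) (α + Real.pi / 2 * δ) ∪
      (Set.Icc (α + Real.pi - Real.pi / 2 * δ) (α + Real.pi + Real.pi / 2 * δ) ∪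
        Set.Icc (α - Real.pi - Real.pi / 2 * δ) (α - Real.pi + Real.pi / 2 * δ)) with hS
    have hvS : volume S ≤ ENNReal.ofReal (3 * Real.pi * δ) := by
      refine (measure_union_le _ _).trans ((add_le_add le_rfl (measure_union_le _ _)).trans ?_)
      rw [Real.volume_Icc, Real.volume_Icc, Real.volume_Icc,
        ← ENNReal.ofReal_add (by ring_nf; positivity) (by ring_nf; positivity),
        ← ENNReal.ofReal_add (by ring_nf; positivity) (by ring_nf; positivity)]
      apply ENNReal.ofReal_le_ofReal
      linarith
    have hle : ∀ θ ∈ Set.Ioc (0 : ℝ) (2 * Real.pi),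
        volume (auxSet ε d α θ) ≤ S.indicator (fun _ => ENNReal.ofReal (2 * ε)) θ := by
      intro θ hθ
      by_cases hm : θ ∈ S
      · rw [Set.indicator_of_mem hm]; exact auxSet_vol ε d α θ hε hd
      · have : auxSet ε d α θ = ∅ := by
          apply auxSet_empty ε d α θ hε h
          by_contra hcon
          apply hm
          have := aux_sin (θ - α) δ (by linarith [hθ.1]) (by linarith [hθ.2]) (not_lt.1 hcon)
          rcases this with h1 | h1 | h1
          · left; rw [abs_le] at h1; constructor <;> linarith [h1.1, h1.2]
          · right; left; rw [abs_le] at h1; constructor <;> linarith [h1.1, h1.2]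
          · right; right; rw [abs_le] at h1; constructor <;> linarith [h1.1, h1.2]
        rw [this]; simp
    calc _ ≤ ENNReal.ofReal (1 / (2 * Real.pi)) *
          (ENNReal.ofReal (2 * ε) * ENNReal.ofReal (3 * Real.pi * δ)) := by
          gcongr
          refine (setLIntegral_mono' measurableSet_Ioc hle).trans ?_
          refine (setLIntegral_le_lintegral _ _).trans ?_
          refine (lintegral_indicator_const_le _ _).trans ?_
          gcongr
      _ = ENNReal.ofReal (9 * ε * Real.exp ε * Real.exp (-d)) := by
          rw [← ENNReal.ofReal_mul (by positivity), ← ENNReal.ofReal_mul (by positivity)]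
          congr 1; rw [hδ]; field_simp; ring
      _ ≤ _ := by
          apply ENNReal.ofReal_le_ofReal
          have h2 : 0 ≤ 2 * ε * Real.exp (ε + 1) * Real.exp (-d) := by positivity
          nlinarith

lemma aux_sinh_le (t : ℝ) : Real.sinh t ≤ Real.exp t / 2 := by
  rw [Real.sinh_eq]
  linarith [Real.exp_pos (-t)]

lemma aux_lower (ε : ℝ) (hε : 0 < ε) : ∃ κ : ℝ, 0 < κ ∧ ∀ d α : ℝ, 0 ≤ d → Real.pi / 2 ≤ α →
    α ≤ 3 * Real.pi / 2 →
    ENNReal.ofReal (κ * Real.exp (-d)) ≤ ENNReal.ofReal (1 / (2 * Real.pi)) *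
      (∫⁻ θ in Set.Ioc (0 : ℝ) (2 * Real.pi), volume (auxSet ε d α θ)) := by
  have hpi := Real.pi_pos
  have hpi3 := Real.pi_gt_three
  have hΔ : 0 < Real.cosh ε - Real.cosh (ε / 2) := by
    rw [sub_pos, Real.cosh_lt_cosh, abs_of_pos hε, abs_of_pos (by linarith)]
    linarith
  set Δ := Real.cosh ε - Real.cosh (ε / 2) with hΔd
  set ν := min 1 (Real.sqrt (Δ * Real.exp (-(ε / 2)))) with hν
  have hν0 : 0 < ν := lt_min one_pos (Real.sqrt_pos.2 (by positivity))
  have hν1 : ν ≤ 1 := min_le_left _ _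
  have hν2 : ν ^ 2 ≤ Δ * Real.exp (-(ε / 2)) := by
    rw [← Real.sq_sqrt (show 0 ≤ Δ * Real.exp (-(ε / 2)) by positivity)]
    exact pow_le_pow_left₀ hν0.le (min_le_right _ _) 2
  refine ⟨1 / (2 * Real.pi) * (ε / 2 * ν), by positivity, ?_⟩
  intro d α hd hα hα'
  have hed : Real.exp (-d) ≤ 1 := Real.exp_le_one_iff.2 (by linarith)
  have hνd : ν * Real.exp (-d) ≤ 1 := mul_le_one₀ hν1 (Real.exp_pos _).le hed
  have hsub : Set.Ioc α (α + ν * Real.exp (-d)) ⊆ Set.Ioc (0 : ℝ) (2 * Real.pi) :=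
    Set.Ioc_subset_Ioc (by linarith) (by linarith)
  have hle : ∀ θ ∈ Set.Ioc α (α + ν * Real.exp (-d)),
      ENNReal.ofReal (ε / 2) ≤ volume (auxSet ε d α θ) := by
    intro θ hθ
    have hv : volume (Set.Icc d (d + ε / 2)) = ENNReal.ofReal (ε / 2) := by
      rw [Real.volume_Icc]; congr 1; ring
    rw [← hv]
    apply measure_mono
    intro t ht
    refine ⟨hd.trans ht.1, ?_⟩
    have k1 : Real.cosh (t - d) ≤ Real.cosh (ε / 2) := by
      rw [Real.cosh_le_cosh, abs_of_nonneg (by linarith [ht.1]), abs_of_pos (by linarith)]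
      linarith [ht.2]
    have k2 : Real.sinh t ≤ Real.exp (d + ε / 2) / 2 :=
      (aux_sinh_le t).trans (div_le_div_of_nonneg_right (Real.exp_le_exp.2 ht.2) (by norm_num))
    have k3 := aux_sinh_le d
    have k4 : Real.sin (θ - α) ^ 2 ≤ (ν * Real.exp (-d)) ^ 2 := by
      rw [← sq_abs (Real.sin (θ - α))]
      apply pow_le_pow_left₀ (abs_nonneg _)
      refine Real.abs_sin_le_abs.trans ?_
      rw [abs_of_pos (by linarith [hθ.1])]
      linarith [hθ.2]
    have s1 : 0 ≤ Real.sinh d := Real.sinh_nonneg_iff.2 hd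
    have k5 : 2 * Real.sinh t * Real.sinh d * Real.sin (θ - α) ^ 2 ≤
        2 * (Real.exp (d + ε / 2) / 2) * (Real.exp d / 2) * (ν * Real.exp (-d)) ^ 2 := by gcongr
    have k6 : 2 * (Real.exp (d + ε / 2) / 2) * (Real.exp d / 2) * (ν * Real.exp (-d)) ^ 2
        = Real.exp (ε / 2) * ν ^ 2 / 2 := by
      have : Real.exp (ε / 2) = Real.exp (d + ε / 2) * Real.exp d * Real.exp (-d) ^ 2 := by
        rw [← Real.exp_nat_mul, ← Real.exp_add, ← Real.exp_add]
        congr 1; push_cast; ring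
      rw [this]; ring
    have k7 : Real.exp (ε / 2) * ν ^ 2 ≤ Δ := by
      calc _ ≤ Real.exp (ε / 2) * (Δ * Real.exp (-(ε / 2))) := by gcongr
        _ = Δ := by rw [mul_left_comm, ← Real.exp_add]; simp
    linarith
  calc ENNReal.ofReal (1 / (2 * Real.pi) * (ε / 2 * ν) * Real.exp (-d))
      = ENNReal.ofReal (1 / (2 * Real.pi)) *
        ∫⁻ θ in Set.Ioc α (α + ν * Real.exp (-d)), ENNReal.ofReal (ε / 2) := by
        rw [setLIntegral_const, Real.volume_Ioc, ← ENNReal.ofReal_mul (by positivity),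
            ← ENNReal.ofReal_mul (by positivity)]
        congr 1; ring
    _ ≤ ENNReal.ofReal (1 / (2 * Real.pi)) *
        ∫⁻ θ in Set.Ioc α (α + ν * Real.exp (-d)), volume (auxSet ε d α θ) := by
        gcongr 1
        exact setLIntegral_mono' measurableSet_Ioc hle
    _ ≤ _ := by
        gcongr 1
        exact lintegral_mono_set hsub

/-- Lemma A.1 for `G = SL(2, ℝ)`: the `K`-average of the Green function of the geodesic flow
at `(z, B(w, ε))` is comparable to `e^{−dist(z, w)}`, uniformly in `z = g•i` and `w`. -/
theorem stmt9 (ε : ℝ) (hε : 0 < ε) :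
    ∃ c : ℝ, 1 < c ∧
      ∀ (g : Matrix.SpecialLinearGroup (Fin 2) ℝ) (w : UpperHalfPlane),
        (ENNReal.ofReal (c⁻¹ * Real.exp (-dist (g • UpperHalfPlane.I) w)) ≤
          ENNReal.ofReal (1 / (2 * Real.pi)) *
            (∫⁻ θ in Set.Ioc (0 : ℝ) (2 * Real.pi),
              volume {t : ℝ | 0 ≤ t ∧
                dist ((g * Rmat θ * Amat t) • UpperHalfPlane.I) w < ε})) ∧
        (ENNReal.ofReal (1 / (2 * Real.pi)) *
            (∫⁻ θ in Set.Ioc (0 : ℝ) (2 * Real.pi),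
              volume {t : ℝ | 0 ≤ t ∧
                dist ((g * Rmat θ * Amat t) • UpperHalfPlane.I) w < ε}) ≤
          ENNReal.ofReal (c * Real.exp (-dist (g • UpperHalfPlane.I) w))) := by
  obtain ⟨κ, hκ, hlow⟩ := aux_lower ε hε
  set C := 2 * ε * Real.exp (ε + 1) + 9 * ε * Real.exp ε with hC
  have hC0 : 0 < C := by positivity
  have hκi : 0 < κ⁻¹ := inv_pos.2 hκ
  refine ⟨1 + κ⁻¹ + C, by linarith, ?_⟩
  intro g w
  obtain ⟨α, hα, hα', hform⟩ := aux_polar (g⁻¹ • w)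
  have hdist : dist (g • UpperHalfPlane.I) w = dist UpperHalfPlane.I (g⁻¹ • w) := by
    rw [← dist_smul g UpperHalfPlane.I (g⁻¹ • w), smul_inv_smul]
  have hset : ∀ θ : ℝ, {t : ℝ | 0 ≤ t ∧
      dist ((g * Rmat θ * Amat t) • UpperHalfPlane.I) w < ε} =
      auxSet ε (dist (g • UpperHalfPlane.I) w) α θ := by
    intro θ
    ext t
    have h1 : dist ((g * Rmat θ * Amat t) • UpperHalfPlane.I) w
        = dist ((Rmat θ * Amat t) • UpperHalfPlane.I) (g⁻¹ • w) := by
      rw [← dist_smul g _ (g⁻¹ • w), smul_inv_smul, smul_smul, mul_assoc]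
    simp only [auxSet, Set.mem_ofPred_eq]
    rw [h1, hdist, ← hform θ t, Real.cosh_lt_cosh, abs_of_nonneg dist_nonneg, abs_of_pos hε]
  simp only [hset]
  constructor
  · refine le_trans (ENNReal.ofReal_le_ofReal ?_) (hlow _ α dist_nonneg hα hα')
    gcongr
    rw [inv_le_comm₀ (by positivity) hκ]
    linarith
  · refine (aux_upper ε _ α hε dist_nonneg hα hα').trans (ENNReal.ofReal_le_ofReal ?_)
    exact mul_le_mul_of_nonneg_right (by linarith) (Real.exp_pos _).le
end

section
/- Let ℍ denote the hyperbolic upper half-plane with its hyperbolic distance dist, on which SL(2, ℝ) acts by Möbius transformations, and let i ∈ ℍ be the point with complex coordinate √−1. For t, θ ∈ ℝ let A(t) ∈ SL(2, ℝ) be the matrix with rows (e^{t/2}, 0) and (0, e^{−t/2}), and let R(θ) ∈ SL(2, ℝ) be the rotation matrix with rows (cos θ, −sin θ) and (sin θ, cos θ). Then for every ε > 0 there exists C > 1 with the following property: for every subgroup Λ of SL(2, ℝ) and every w ∈ ℍ such that the open hyperbolic balls B(g•w, ε), g ∈ Λ, are pairwise disjoint (for distinct elements g ≠ g' of Λ),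 and for every g₁ ∈ SL(2, ℝ), writing z = g₁•i, one has in [0, ∞]: C⁻¹·Σ_{g∈Λ} exp(−dist(z, g•w)) ≤ (1/(2π))·∫₀^{2π} Leb({t ∈ [0, ∞) : ∃ g ∈ Λ, dist((g₁·R(θ)·A(t))•i, g•w) < ε}) dθ ≤ C·Σ_{g∈Λ} exp(−dist(z, g•w)), where both sides may be infinite, Leb denotes Lebesgue measure on ℝ, B(u, ε) = {v ∈ ℍ : dist(v, u) < ε}, and the sum over Λ is the unordered sum of nonnegative extended reals. -/
open MeasureTheory UpperHalfPlane
open scoped ENNReal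

lemma RA_coe (θ t : ℝ) : ((Rmat θ * Amat t : Matrix.SpecialLinearGroup (Fin 2) ℝ) :
    Matrix (Fin 2) (Fin 2) ℝ) =
    !![Real.cos θ * Real.exp (t/2), -Real.sin θ * Real.exp (-(t/2));
       Real.sin θ * Real.exp (t/2), Real.cos θ * Real.exp (-(t/2))] := by
  rw [Matrix.SpecialLinearGroup.coe_mul]
  simp [Rmat, Amat]

lemma smul_I_eq (θ t : ℝ) : ((((Rmat θ * Amat t) • UpperHalfPlane.I : ℍ)) : ℂ) =
    (Real.cos θ * Real.exp (t/2) * Complex.I - Real.sin θ * Real.exp (-(t/2))) /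
    (Real.sin θ * Real.exp (t/2) * Complex.I + Real.cos θ * Real.exp (-(t/2))) := by
  rw [coe_specialLinearGroup_apply, RA_coe]
  simp
  ring

lemma den_pos (θ t : ℝ) :
    0 < Real.sin θ ^ 2 * Real.exp t + Real.cos θ ^ 2 * Real.exp (-t) := by
  have h1 := Real.exp_pos t
  have h2 := Real.exp_pos (-t)
  have h3 := Real.sin_sq_add_cos_sq θ
  by_cases h : Real.sin θ = 0
  · rw [h] at h3 ⊢
    have : Real.cos θ ^ 2 = 1 := by linarith
    rw [this]; simpa using h2
  · positivity

lemma smul_I_coe (θ t : ℝ) : ((((Rmat θ * Amat t) • UpperHalfPlane.I : ℍ)) : ℂ) =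
    ⟨(Real.exp t - Real.exp (-t)) * Real.sin θ * Real.cos θ /
      (Real.sin θ ^ 2 * Real.exp t + Real.cos θ ^ 2 * Real.exp (-t)),
     1 / (Real.sin θ ^ 2 * Real.exp t + Real.cos θ ^ 2 * Real.exp (-t))⟩ := by
  have hD := den_pos θ t
  rw [smul_I_eq]
  have e1 : Real.exp t = Real.exp (t/2) ^ 2 := by rw [← Real.exp_nat_mul]; congr 1; push_cast; ring
  have e2 : Real.exp (-t) = Real.exp (-(t/2)) ^ 2 := by
    rw [← Real.exp_nat_mul]; congr 1; push_cast; ring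
  have e3 : Real.exp (t/2) * Real.exp (-(t/2)) = 1 := by rw [← Real.exp_add]; simp
  rw [e1, e2] at hD ⊢
  clear e1 e2
  generalize Real.exp (t/2) = u at *
  generalize Real.exp (-(t/2)) = v at *
  have h3 := Real.sin_sq_add_cos_sq θ
  generalize Real.sin θ = s at *
  generalize Real.cos θ = c at *
  have hne : (s * u * Complex.I + c * v : ℂ) ≠ 0 := by
    intro h
    have h1 := congrArg Complex.re h
    have h2 := congrArg Complex.im h
    simp at h1 h2
    have : s ^ 2 * u ^ 2 + c ^ 2 * v ^ 2 = (s*u)^2 + (c*v)^2 := by ring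
    rw [this] at hD
    rcases h1 with h1 | h1 <;> rcases h2 with h2 | h2 <;> simp [h1, h2] at hD
  rw [div_eq_iff hne]
  have hD' := hD.ne'
  generalize hDe : s ^ 2 * u ^ 2 + c ^ 2 * v ^ 2 = D at *
  apply Complex.ext
  · simp
    rw [← sub_eq_zero]
    field_simp
    linear_combination (-s*u*(u*v)) * h3 - s * u * e3 + s * v * hDe
  · simp
    rw [← sub_eq_zero]
    field_simp
    linear_combination (c*u*v^2) * h3 + c * v * e3 - c * u * hDe

lemma cosh_dist_formula (θ t : ℝ) (p : ℍ) :
    Real.cosh (dist ((Rmat θ * Amat t) • UpperHalfPlane.I) p) =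
      Real.cosh t * ((p.re^2 + p.im^2 + 1) / (2 * p.im)) - Real.sinh t *
        ((p.re^2+p.im^2 - 1) / (2 * p.im) * Real.cos (2*θ) + p.re / p.im * Real.sin (2*θ)) := by
  have hD := den_pos θ t
  have hp := p.im_pos
  have hre := congrArg Complex.re (smul_I_coe θ t)
  have him := congrArg Complex.im (smul_I_coe θ t)
  simp only [coe_re, coe_im] at hre him
  rw [cosh_dist', hre, him, Real.cos_two_mul, Real.sin_two_mul, Real.cosh_eq, Real.sinh_eq]
  have e3 : Real.exp t * Real.exp (-t) = 1 := by rw [← Real.exp_add]; simp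
  have h3 := Real.sin_sq_add_cos_sq θ
  generalize Real.exp t = u at *
  generalize Real.exp (-t) = v at *
  generalize Real.sin θ = s at *
  generalize Real.cos θ = c at *
  generalize p.re = x at *
  generalize p.im = y at *
  have key : ((u-v)*s*c)^2 + 1 = (s^2*u+c^2*v) * (c^2*u+s^2*v) := by
    have : (s^2+c^2)^2 = 1 := by rw [h3]; norm_num
    linear_combination (-(2*s^2*c^2) - (s^4 + c^4)) * e3 - this
  have hs : s^2 = 1 - c^2 := by linarith
  set D := s^2*u+c^2*v with hDdef
  have : (((u - v) * s * c / D - x) ^ 2 + (1/D) ^ 2 + y ^ 2) / (2 * (1/D) * y) =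
    ((c^2*u+s^2*v) - 2*x*(u-v)*s*c + (x^2+y^2)*D) / (2*y) := by
    field_simp
    linear_combination key
  rw [this, hDdef]
  field_simp
  rw [hs]
  ring

lemma cosh_dist_I (p : ℍ) :
    Real.cosh (dist UpperHalfPlane.I p) = (p.re^2 + p.im^2 + 1) / (2 * p.im) := by
  have := cosh_dist_formula 0 0 p
  have h1 : Rmat 0 * Amat 0 = 1 := by
    apply Subtype.ext
    rw [RA_coe]
    simp [Matrix.one_fin_two]
  simpa [h1] using this

lemma cosh_dist_polar (p : ℍ) : ∃ φ : ℝ, Real.pi/2 ≤ φ ∧ φ ≤ 3*Real.pi/2 ∧ ∀ θ t : ℝ,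
    Real.cosh (dist ((Rmat θ * Amat t) • UpperHalfPlane.I) p) =
      Real.cosh (t - dist UpperHalfPlane.I p) +
       2 * Real.sinh t * Real.sinh (dist UpperHalfPlane.I p) * Real.sin (θ - φ) ^ 2 := by
  have ha := cosh_dist_I p
  have hd : 0 ≤ dist UpperHalfPlane.I p := dist_nonneg
  have hf := fun θ t => cosh_dist_formula θ t p
  generalize dist UpperHalfPlane.I p = d at *
  have hp := p.im_pos
  set z : ℂ := ⟨(p.re^2+p.im^2 - 1) / (2 * p.im), p.re / p.im⟩ with hz
  have hn : ‖z‖ = Real.sinh d := by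
    have h0 := Real.sinh_nonneg_iff.2 hd
    rw [← sq_eq_sq₀ (norm_nonneg _) h0, ← Complex.normSq_eq_norm_sq, Complex.normSq_apply,
      Real.sinh_sq, ha, hz]
    simp only
    field_simp
    ring
  have hre : (p.re^2+p.im^2 - 1) / (2 * p.im) = Real.sinh d * Real.cos z.arg := by
    rw [← hn, Complex.norm_mul_cos_arg]
  have him : p.re / p.im = Real.sinh d * Real.sin z.arg := by
    rw [← hn, Complex.norm_mul_sin_arg]
  refine ⟨z.arg/2 + Real.pi, by linarith [Complex.neg_pi_lt_arg z],
    by linarith [Complex.arg_le_pi z], fun θ t => ?_⟩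
  rw [hf, ← ha, hre, him, Real.cosh_sub, Real.sin_sq_eq_half_sub]
  have : Real.cos (2 * (θ - (z.arg / 2 + Real.pi))) = Real.cos (2*θ - z.arg) := by
    rw [← Real.cos_add_two_pi]; congr 1; ring
  rw [this, Real.cos_sub]
  ring

/-- The set of times at which the ray of angle `θ` from `i` is `ε`-close to `p`. -/
def Sset (ε : ℝ) (p : ℍ) (θ : ℝ) : Set ℝ :=
  {t : ℝ | 0 ≤ t ∧ dist ((Rmat θ * Amat t) • UpperHalfPlane.I) p < ε}

lemma dist_lt_iff_cosh {ε : ℝ} (hε : 0 < ε) (x y : ℍ) :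
    dist x y < ε ↔ Real.cosh (dist x y) < Real.cosh ε := by
  rw [Real.cosh_lt_cosh, abs_of_nonneg dist_nonneg, abs_of_pos hε]

lemma measurableSet_SsetProd {ε : ℝ} (hε : 0 < ε) (p : ℍ) :
    MeasurableSet {x : ℝ × ℝ | x.2 ∈ Sset ε p x.1} := by
  have : {x : ℝ × ℝ | x.2 ∈ Sset ε p x.1} = {x : ℝ × ℝ | 0 ≤ x.2} ∩
      {x : ℝ × ℝ | Real.cosh x.2 * ((p.re^2 + p.im^2 + 1) / (2 * p.im)) - Real.sinh x.2 *
        ((p.re^2+p.im^2 - 1) / (2 * p.im) * Real.cos (2*x.1) + p.re / p.im * Real.sin (2*x.1))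
         < Real.cosh ε} := by
    ext x
    simp only [Sset, Set.mem_ofPred_eq, Set.mem_inter_iff, dist_lt_iff_cosh hε, cosh_dist_formula]
  rw [this]
  apply MeasurableSet.inter
  · exact measurableSet_le measurable_const measurable_snd
  · apply IsOpen.measurableSet
    apply isOpen_lt _ continuous_const
    have := Real.continuous_cosh
    have := Real.continuous_sinh
    fun_prop

lemma measurableSet_Sset {ε : ℝ} (hε : 0 < ε) (p : ℍ) (θ : ℝ) : MeasurableSet (Sset ε p θ) :=
  (measurable_prodMk_left (x := θ)) (measurableSet_SsetProd hε p)

lemma measurable_vol {ε : ℝ} (hε : 0 < ε) (p : ℍ) : Measurable fun θ => volume (Sset ε p θ) :=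
  measurable_measure_prodMk_left (measurableSet_SsetProd hε p)

lemma lower_bound (ε : ℝ) (hε : 0 < ε) : ∃ m : ℝ, 0 < m ∧ ∀ p : ℍ,
    ENNReal.ofReal (m * Real.exp (-dist UpperHalfPlane.I p)) ≤
      ∫⁻ θ in Set.Ioc (0 : ℝ) (2 * Real.pi), volume (Sset ε p θ) := by
  have hgap : 0 < Real.cosh ε - Real.cosh (ε/2) := by
    rw [sub_pos, Real.cosh_lt_cosh, abs_of_pos hε, abs_of_pos (by linarith)]; linarith
  obtain ⟨η, hη0, hη1, hη⟩ : ∃ η : ℝ, 0 < η ∧ η ≤ 1 ∧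
      Real.exp (ε/2) * η < Real.cosh ε - Real.cosh (ε/2) := by
    set G := Real.cosh ε - Real.cosh (ε/2)
    have hE := Real.exp_pos (ε/2)
    refine ⟨min 1 (G / (2 * Real.exp (ε/2))), by positivity, min_le_left _ _, ?_⟩
    calc Real.exp (ε/2) * min 1 (G / (2 * Real.exp (ε/2)))
        ≤ Real.exp (ε/2) * (G / (2 * Real.exp (ε/2))) := by gcongr; exact min_le_right _ _
      _ = G/2 := by field_simp
      _ < G := by linarith
  refine ⟨η * (ε/2), by positivity, fun p => ?_⟩
  obtain ⟨φ, h1, h2, hc⟩ := cosh_dist_polar p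
  have hd : 0 ≤ dist UpperHalfPlane.I p := dist_nonneg
  set d := dist UpperHalfPlane.I p with hdd
  have hπ := Real.pi_gt_three
  have hed : Real.exp (-d) ≤ 1 := Real.exp_le_one_iff.2 (by linarith)
  have hed0 := Real.exp_pos (-d)
  have hsub : Set.Ioc φ (φ + η * Real.exp (-d)) ⊆ Set.Ioc 0 (2 * Real.pi) := by
    intro θ ⟨ha, hb⟩
    have : η * Real.exp (-d) ≤ 1 := mul_le_one₀ hη1 hed0.le hed
    constructor <;> linarith
  have hin : ∀ θ ∈ Set.Ioc φ (φ + η * Real.exp (-d)), ENNReal.ofReal (ε/2) ≤ volume (Sset ε p θ) := by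
    intro θ ⟨ha, hb⟩
    have hI : Set.Icc d (d + ε/2) ⊆ Sset ε p θ := by
      intro t ⟨hta, htb⟩
      refine ⟨hd.trans hta, ?_⟩
      rw [dist_lt_iff_cosh hε, hc]
      have c1 : Real.cosh (t - d) ≤ Real.cosh (ε/2) := by
        rw [Real.cosh_le_cosh, abs_of_nonneg (by linarith), abs_of_pos (by linarith)]; linarith
      have s0 : 0 ≤ Real.sinh d := Real.sinh_nonneg_iff.2 hd
      have s1 : Real.sinh d ≤ Real.exp d / 2 := by
        rw [Real.sinh_eq]; linarith [Real.exp_pos (-d)]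
      have s2 : Real.sinh t ≤ Real.exp d * Real.exp (ε/2) / 2 := by
        rw [Real.sinh_eq, ← Real.exp_add]
        have := Real.exp_le_exp.2 htb
        linarith [Real.exp_pos (-t)]
      have s3 : Real.sin (θ - φ) ^ 2 ≤ (η * Real.exp (-d)) ^ 2 := by
        refine (Real.sin_sq_le_sq).trans ?_
        apply pow_le_pow_left₀ <;> linarith
      have he : Real.exp d * Real.exp (-d) = 1 := by rw [← Real.exp_add]; simp
      have : 2 * Real.sinh t * Real.sinh d * Real.sin (θ - φ) ^ 2 ≤ Real.exp (ε/2) * η := by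
        calc 2 * Real.sinh t * Real.sinh d * Real.sin (θ - φ) ^ 2
            ≤ 2 * (Real.exp d * Real.exp (ε/2) / 2) * (Real.exp d / 2) * (η * Real.exp (-d)) ^ 2 := by
              gcongr
          _ = Real.exp (ε/2) * η * (η / 2) * (Real.exp d * Real.exp (-d))^2 := by ring
          _ = Real.exp (ε/2) * η * (η / 2) := by rw [he]; ring
          _ ≤ Real.exp (ε/2) * η * 1 := by gcongr; linarith
          _ = _ := by ring
      linarith
    calc ENNReal.ofReal (ε/2) = volume (Set.Icc d (d + ε/2)) := by
          rw [Real.volume_Icc]; congr 1; ring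
      _ ≤ _ := measure_mono hI
  calc ENNReal.ofReal (η * (ε/2) * Real.exp (-d))
      = ∫⁻ θ in Set.Ioc φ (φ + η * Real.exp (-d)), ENNReal.ofReal (ε/2) := by
        rw [setLIntegral_const, Real.volume_Ioc, ← ENNReal.ofReal_mul (by positivity)]
        congr 1; ring
    _ ≤ ∫⁻ θ in Set.Ioc φ (φ + η * Real.exp (-d)), volume (Sset ε p θ) :=
        setLIntegral_mono' measurableSet_Ioc hin
    _ ≤ _ := lintegral_mono_set hsub

lemma sin_small {u η : ℝ} (h : |Real.sin u| ≤ η) (hu : |u| ≤ 3 * Real.pi / 2) :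
    |u| ≤ Real.pi/2 * η ∨ |u - Real.pi| ≤ Real.pi/2 * η ∨ |u + Real.pi| ≤ Real.pi/2 * η := by
  have hπ := Real.pi_pos
  have key : ∀ x : ℝ, |Real.sin x| ≤ η → |x| ≤ Real.pi/2 → |x| ≤ Real.pi/2 * η := by
    intro x hx hx2
    have := (Real.mul_abs_le_abs_sin hx2).trans hx
    calc |x| = Real.pi/2 * (2/Real.pi * |x|) := by field_simp
      _ ≤ _ := by gcongr
  rw [abs_le] at hu
  by_cases c1 : |u| ≤ Real.pi/2
  · exact Or.inl (key _ h c1)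
  right
  by_cases c2 : 0 ≤ u
  · left
    rw [abs_of_nonneg c2] at c1
    apply key
    · rwa [Real.sin_sub_pi, abs_neg]
    · rw [abs_le]; constructor <;> linarith
  · right
    rw [abs_of_neg (by linarith)] at c1
    apply key
    · rwa [Real.sin_add_pi, abs_neg]
    · rw [abs_le]; constructor <;> linarith

lemma upper_bound (ε : ℝ) (hε : 0 < ε) : ∃ M : ℝ, 0 < M ∧ ∀ p : ℍ,
      ∫⁻ θ in Set.Ioc (0 : ℝ) (2 * Real.pi), volume (Sset ε p θ) ≤
    ENNReal.ofReal (M * Real.exp (-dist UpperHalfPlane.I p)) := by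
  have hπ := Real.pi_pos
  have hc0 : 0 < Real.exp (-ε) * (1 - Real.exp (-2*ε)) / 2 := by
    have : Real.exp (-2*ε) < 1 := by rw [Real.exp_lt_one_iff]; linarith
    have := Real.exp_pos (-ε)
    have : 0 < 1 - Real.exp (-2*ε) := by linarith
    positivity
  set c := Real.exp (-ε) * (1 - Real.exp (-2*ε)) / 2 with hcdef
  set K := Real.cosh ε / c with hK
  have hch := Real.one_le_cosh ε
  have hK0 : 0 < K := by positivity
  refine ⟨4 * Real.pi * ε * Real.exp (2*ε) + 2 * ε * (3 * Real.pi * K), by positivity, fun p => ?_⟩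
  obtain ⟨φ, h1, h2, hc⟩ := cosh_dist_polar p
  have hd : 0 ≤ dist UpperHalfPlane.I p := dist_nonneg
  set d := dist UpperHalfPlane.I p with hdd
  have hclose : ∀ θ, ∀ t ∈ Sset ε p θ, |t - d| < ε ∧
      2 * Real.sinh t * Real.sinh d * Real.sin (θ - φ) ^ 2 < Real.cosh ε := by
    intro θ t ⟨ht, h⟩
    rw [dist_lt_iff_cosh hε, hc] at h
    have s0 : 0 ≤ Real.sinh d := Real.sinh_nonneg_iff.2 hd
    have s1 : 0 ≤ Real.sinh t := Real.sinh_nonneg_iff.2 ht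
    have : 0 ≤ 2 * Real.sinh t * Real.sinh d * Real.sin (θ - φ) ^ 2 := by positivity
    have h3 : Real.cosh (t - d) < Real.cosh ε := by linarith
    rw [Real.cosh_lt_cosh, abs_of_pos hε] at h3
    exact ⟨h3, by linarith [Real.cosh_pos (t - d)]⟩
  have hvol : ∀ θ, volume (Sset ε p θ) ≤ ENNReal.ofReal (2*ε) := by
    intro θ
    calc volume (Sset ε p θ) ≤ volume (Set.Icc (d - ε) (d + ε)) := by
          apply measure_mono
          intro t ht
          have := abs_lt.1 (hclose θ t ht).1
          constructor <;> linarith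
      _ = _ := by rw [Real.volume_Icc]; congr 1; ring
  have hed0 := Real.exp_pos (-d)
  by_cases hcase : d ≤ 2 * ε
  · calc ∫⁻ θ in Set.Ioc (0 : ℝ) (2 * Real.pi), volume (Sset ε p θ)
        ≤ ∫⁻ θ in Set.Ioc (0 : ℝ) (2 * Real.pi), ENNReal.ofReal (2*ε) :=
          lintegral_mono fun θ => hvol θ
      _ = ENNReal.ofReal (2*ε * (2 * Real.pi)) := by
          rw [setLIntegral_const, Real.volume_Ioc, ← ENNReal.ofReal_mul (by positivity), sub_zero]
      _ ≤ _ := by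
          apply ENNReal.ofReal_le_ofReal
          have : 1 ≤ Real.exp (2*ε) * Real.exp (-d) := by
            rw [← Real.exp_add]; exact Real.one_le_exp (by linarith)
          have h5 : 0 ≤ 2 * ε * (3 * Real.pi * K) * Real.exp (-d) := by positivity
          have : 4 * Real.pi * ε * 1 ≤ 4 * Real.pi * ε * (Real.exp (2*ε) * Real.exp (-d)) := by
            gcongr
          nlinarith
  · push Not at hcase
    set r := Real.pi / 2 * (K * Real.exp (-d)) with hr
    have hr0 : 0 < r := by positivity
    set E : Set ℝ := Set.Icc (φ - r) (φ + r) ∪ (Set.Icc (φ + Real.pi - r) (φ + Real.pi + r) ∪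
      Set.Icc (φ - Real.pi - r) (φ - Real.pi + r)) with hE
    have hEm : MeasurableSet E :=
      measurableSet_Icc.union (measurableSet_Icc.union measurableSet_Icc)
    have hEv : volume E ≤ ENNReal.ofReal (3 * Real.pi * K * Real.exp (-d)) := by
      calc volume E ≤ ENNReal.ofReal (2*r) + (ENNReal.ofReal (2*r) + ENNReal.ofReal (2*r)) := by
            refine (measure_union_le _ _).trans (add_le_add ?_ ((measure_union_le _ _).trans
              (add_le_add ?_ ?_)))
            all_goals
              rw [Real.volume_Icc]
              apply ENNReal.ofReal_le_ofReal
              linarith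
        _ = _ := by
            rw [← ENNReal.ofReal_add (by positivity) (by positivity),
              ← ENNReal.ofReal_add (by positivity) (by positivity)]
            congr 1; rw [hr]; ring
    have hsinh : ∀ x, d - ε ≤ x → c * Real.exp d ≤ Real.sinh x := by
      intro x hx
      refine le_trans ?_ (Real.sinh_le_sinh.2 hx)
      rw [Real.sinh_eq, hcdef]
      have e1 : Real.exp (d - ε) = Real.exp (-ε) * Real.exp d := by
        rw [← Real.exp_add]; congr 1; ring
      have e2 : Real.exp (-(d - ε)) ≤ Real.exp (-ε) * Real.exp (-2*ε) * Real.exp d := by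
        rw [← Real.exp_add, ← Real.exp_add]; apply Real.exp_le_exp.2; linarith
      rw [e1]
      nlinarith
    have hmem : ∀ θ ∈ Set.Ioc (0 : ℝ) (2 * Real.pi), volume (Sset ε p θ) ≤
        E.indicator (fun _ => ENNReal.ofReal (2*ε)) θ := by
      intro θ ⟨hθ0, hθ1⟩
      by_cases hθ : θ ∈ E
      · rw [Set.indicator_of_mem hθ]; exact hvol θ
      · have : Sset ε p θ = ∅ := by
          by_contra hne
          obtain ⟨t, ht⟩ := Set.nonempty_iff_ne_empty.2 hne
          obtain ⟨hta, htb⟩ := hclose θ t ht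
          have hta' := abs_lt.1 hta
          apply hθ
          have s1 := hsinh t (by linarith)
          have s2 := hsinh d (by linarith)
          have hsin : |Real.sin (θ - φ)| ≤ K * Real.exp (-d) := by
            apply abs_le_of_sq_le_sq _ (by positivity)
            have hpos : 0 < (c * Real.exp d) * (c * Real.exp d) := by positivity
            have s3 : (c * Real.exp d) * (c * Real.exp d) * Real.sin (θ - φ) ^ 2 ≤
                Real.sinh t * Real.sinh d * Real.sin (θ - φ) ^ 2 := by
              have : 0 ≤ Real.sinh t := le_trans (by positivity) s1
              gcongr
            have he : Real.exp d * Real.exp (-d) = 1 := by rw [← Real.exp_add]; simp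
            have hk : c * K = Real.cosh ε := by rw [hK]; field_simp
            have s4 : (c * Real.exp d) * (c * Real.exp d) * (K * Real.exp (-d)) ^ 2 =
                Real.cosh ε ^ 2 := by
              calc _ = (c * K)^2 * (Real.exp d * Real.exp (-d))^2 := by ring
                _ = _ := by rw [he, hk]; ring
            refine le_of_mul_le_mul_left ?_ hpos
            rw [s4]
            nlinarith
          have hu : |θ - φ| ≤ 3 * Real.pi / 2 := by
            rw [abs_le]; constructor <;> linarith
          rcases sin_small hsin hu with h | h | h
          · left; rw [abs_le] at h; constructor <;> linarith
          · right; left; rw [abs_le] at h; constructor <;> linarith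
          · right; right; rw [abs_le] at h; constructor <;> linarith
        rw [this]; simp
    calc ∫⁻ θ in Set.Ioc (0 : ℝ) (2 * Real.pi), volume (Sset ε p θ)
        ≤ ∫⁻ θ in Set.Ioc (0 : ℝ) (2 * Real.pi), E.indicator (fun _ => ENNReal.ofReal (2*ε)) θ :=
          setLIntegral_mono' measurableSet_Ioc hmem
      _ ≤ ∫⁻ θ, E.indicator (fun _ => ENNReal.ofReal (2*ε)) θ := setLIntegral_le_lintegral _ _
      _ = ENNReal.ofReal (2*ε) * volume E := lintegral_indicator_const hEm _
      _ ≤ ENNReal.ofReal (2*ε) * ENNReal.ofReal (3 * Real.pi * K * Real.exp (-d)) := by gcongr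
      _ = ENNReal.ofReal (2*ε * (3 * Real.pi * K * Real.exp (-d))) := by
          rw [← ENNReal.ofReal_mul (by positivity)]
      _ ≤ _ := by
          apply ENNReal.ofReal_le_ofReal
          have : 0 ≤ 4 * Real.pi * ε * Real.exp (2*ε) * Real.exp (-d) := by positivity
          linarith


/-- Lemma A.2 for `G = SL(2, ℝ)`: if the balls `B(g•w, ε)`, `g ∈ Λ`, are pairwise disjoint,
then the `K`-average of the Green function of the geodesic flow on `Λ\ℍ` is comparable to the
Poincaré series `Σ_{g∈Λ} e^{−dist(z, g•w)}` at the critical exponent `δ_G = 1`. -/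
theorem stmt10 (ε : ℝ) (hε : 0 < ε) :
    ∃ C : ℝ, 1 < C ∧
      ∀ (Λ : Subgroup (Matrix.SpecialLinearGroup (Fin 2) ℝ)) (w : UpperHalfPlane),
        (∀ g ∈ Λ, ∀ g' ∈ Λ, g ≠ g' →
          Disjoint (Metric.ball (g • w) ε) (Metric.ball (g' • w) ε)) →
        ∀ g₁ : Matrix.SpecialLinearGroup (Fin 2) ℝ,
          (ENNReal.ofReal C)⁻¹ *
              (∑' g : Λ, ENNReal.ofReal
                (Real.exp (-dist (g₁ • UpperHalfPlane.I) ((g : Matrix.SpecialLinearGroup (Fin 2) ℝ) • w)))) ≤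
            ENNReal.ofReal (1 / (2 * Real.pi)) *
              (∫⁻ θ in Set.Ioc (0 : ℝ) (2 * Real.pi),
                volume {t : ℝ | 0 ≤ t ∧ ∃ g ∈ Λ,
                  dist ((g₁ * Rmat θ * Amat t) • UpperHalfPlane.I) (g • w) < ε}) ∧
          ENNReal.ofReal (1 / (2 * Real.pi)) *
              (∫⁻ θ in Set.Ioc (0 : ℝ) (2 * Real.pi),
                volume {t : ℝ | 0 ≤ t ∧ ∃ g ∈ Λ,
                  dist ((g₁ * Rmat θ * Amat t) • UpperHalfPlane.I) (g • w) < ε}) ≤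
            ENNReal.ofReal C *
              (∑' g : Λ, ENNReal.ofReal
                (Real.exp (-dist (g₁ • UpperHalfPlane.I) ((g : Matrix.SpecialLinearGroup (Fin 2) ℝ) • w)))) := by
  obtain ⟨m, hm, hlow⟩ := lower_bound ε hε
  obtain ⟨M, hM, hup⟩ := upper_bound ε hε
  have hπ := Real.pi_pos
  refine ⟨2 + 2 * Real.pi / m + M / (2 * Real.pi), by
    have : 0 < 2 * Real.pi / m := by positivity
    have : 0 < M / (2 * Real.pi) := by positivity
    linarith, fun Λ w hdisj g₁ => ?_⟩
  set C := 2 + 2 * Real.pi / m + M / (2 * Real.pi) with hC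
  have hC0 : 0 < C := by positivity
  have : Countable Λ := by
    apply Pairwise.countable_of_isOpen_disjoint
      (s := fun g : Λ => Metric.ball ((g : Matrix.SpecialLinearGroup (Fin 2) ℝ) • w) ε)
    · intro g g' hgg'
      exact hdisj g g.2 g' g'.2 (fun h => hgg' (Subtype.ext h))
    · intro g; exact Metric.isOpen_ball
    · intro g; exact Metric.nonempty_ball.2 hε
  let P : Λ → ℍ := fun g => g₁⁻¹ • ((g : Matrix.SpecialLinearGroup (Fin 2) ℝ) • w)
  have hdI : ∀ g : Λ, dist (g₁ • UpperHalfPlane.I)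
      ((g : Matrix.SpecialLinearGroup (Fin 2) ℝ) • w) = dist UpperHalfPlane.I (P g) := by
    intro g
    rw [← dist_smul g₁ UpperHalfPlane.I (P g), smul_inv_smul]
  have hdR : ∀ (g : Λ) θ t, dist ((g₁ * Rmat θ * Amat t) • UpperHalfPlane.I)
      ((g : Matrix.SpecialLinearGroup (Fin 2) ℝ) • w) =
      dist ((Rmat θ * Amat t) • UpperHalfPlane.I) (P g) := by
    intro g θ t
    rw [← dist_smul g₁ ((Rmat θ * Amat t) • UpperHalfPlane.I) (P g), smul_inv_smul, mul_assoc,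
      mul_smul]
  have hset : ∀ θ, {t : ℝ | 0 ≤ t ∧ ∃ g ∈ Λ,
      dist ((g₁ * Rmat θ * Amat t) • UpperHalfPlane.I) (g • w) < ε} = ⋃ g : Λ, Sset ε (P g) θ := by
    intro θ
    ext t
    simp only [Set.mem_ofPred_eq, Set.mem_iUnion, Sset]
    constructor
    · rintro ⟨h0, g, hg, h⟩
      exact ⟨⟨g, hg⟩, h0, by rw [← hdR ⟨g, hg⟩]; exact h⟩
    · rintro ⟨g, h0, h⟩
      exact ⟨h0, g, g.2, by rw [hdR g]; exact h⟩
  have hvol : ∀ θ, volume {t : ℝ | 0 ≤ t ∧ ∃ g ∈ Λ,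
      dist ((g₁ * Rmat θ * Amat t) • UpperHalfPlane.I) (g • w) < ε} =
      ∑' g : Λ, volume (Sset ε (P g) θ) := by
    intro θ
    rw [hset]
    apply measure_iUnion _ (fun g => measurableSet_Sset hε _ _)
    intro g g' hgg'
    rw [Function.onFun, Set.disjoint_left]
    rintro t ⟨_, h⟩ ⟨_, h'⟩
    rw [← hdR] at h h'
    exact Set.disjoint_left.1 (hdisj g g.2 g' g'.2 (fun h => hgg' (Subtype.ext h)))
      (Metric.mem_ball.2 h) (Metric.mem_ball.2 h')
  simp only [hvol, hdI]
  rw [lintegral_tsum (fun g => (measurable_vol hε _).aemeasurable)]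
  simp only [← ENNReal.tsum_mul_left]
  rw [← ENNReal.ofReal_inv_of_pos hC0]
  constructor
  · refine ENNReal.tsum_le_tsum fun g => ?_
    refine le_trans ?_ (mul_le_mul_right (hlow (P g)) _)
    rw [← ENNReal.ofReal_mul (by positivity), ← ENNReal.ofReal_mul (by positivity)]
    apply ENNReal.ofReal_le_ofReal
    rw [← mul_assoc]
    gcongr
    rw [inv_le_comm₀ hC0 (by positivity)]
    have e : (1 / (2 * Real.pi) * m)⁻¹ = 2 * Real.pi / m := by field_simp
    have : 0 < M / (2 * Real.pi) := by positivity
    rw [e, hC]; linarith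
  · refine ENNReal.tsum_le_tsum fun g => ?_
    refine le_trans (mul_le_mul_right (hup (P g)) _) ?_
    rw [← ENNReal.ofReal_mul (by positivity), ← ENNReal.ofReal_mul (by positivity)]
    apply ENNReal.ofReal_le_ofReal
    rw [← mul_assoc]
    gcongr
    have e : 1 / (2 * Real.pi) * M = M / (2 * Real.pi) := by field_simp
    have : 0 < 2 * Real.pi / m := by positivity
    rw [e, hC]; linarith
end
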